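/- arXiv:2604.18306 — 6 statements merged into one kernel-verified Lean document; each statement's English description precedes it below -/
import Mathlib

section
/- If k > 2 is a real number satisfying k³ − 6k² + 8k − 4 = 0, then 1 − (2k√(k−1) − 4k + 4)/(k−2)² = 1 − 2/k; that is, f(k) = 1 − 2/k. -/
noncomputable def f (k : ℝ) : ℝ :=
  1 - (2 * k * Real.sqrt (k - 1) - 4 * k + 4) / (k - 2) ^ 2

/-!
Put `s = √(k - 1)`. The fraction defining `f k` has the common factor `(s - 1) ^ 2`, and cancelling
it gives `f k = 1 - 2 * s / (s + 1) ^ 2`. The cubic is `((k - 2) * s) ^ 2 - k ^ 2`, so its roots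
`k > 2` are the solutions of `(k - 2) * s = k`, which is the same as `(s + 1) ^ 2 = k * s`.
-/

theorem f_eq_one_sub_two_mul_sqrt_div {k : ℝ} (hk : 1 ≤ k) (hk2 : k ≠ 2) :
    f k = 1 - 2 * √(k - 1) / (√(k - 1) + 1) ^ 2 := by
  have hsq : √(k - 1) ^ 2 = k - 1 := Real.sq_sqrt (sub_nonneg.mpr hk)
  rw [f]
  set s := √(k - 1)
  have hnum : 2 * k * s - 4 * k + 4 = 2 * s * (s - 1) ^ 2 := by
    linear_combination (4 - 2 * s) * hsq
  have hfactor : k - 2 = (s + 1) * (s - 1) := by linear_combination -hsq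
  have hs : s - 1 ≠ 0 := right_ne_zero_of_mul (hfactor ▸ sub_ne_zero.mpr hk2)
  rw [hnum, hfactor, mul_pow, mul_div_mul_right _ _ (pow_ne_zero 2 hs)]

theorem sub_two_mul_sqrt_sub_one_eq_self_iff {k : ℝ} (hk : 2 ≤ k) :
    (k - 2) * √(k - 1) = k ↔ k ^ 3 - 6 * k ^ 2 + 8 * k - 4 = 0 := by
  have hlhs : 0 ≤ (k - 2) * √(k - 1) := mul_nonneg (sub_nonneg.mpr hk) (Real.sqrt_nonneg _)
  have hcubic : (k - 2) ^ 2 * (k - 1) - k ^ 2 = k ^ 3 - 6 * k ^ 2 + 8 * k - 4 := by ring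
  rw [← sq_eq_sq₀ hlhs (by linarith), mul_pow, Real.sq_sqrt (by linarith), ← sub_eq_zero, hcubic]

theorem stmt1 (k : ℝ) (hk : 2 < k) (hroot : k ^ 3 - 6 * k ^ 2 + 8 * k - 4 = 0) :
    f k = 1 - 2 / k := by
  have hsqrt : (k - 2) * √(k - 1) = k := (sub_two_mul_sqrt_sub_one_eq_self_iff hk.le).mpr hroot
  have hpos : 0 < √(k - 1) := Real.sqrt_pos.mpr (by linarith)
  have hdenom : (√(k - 1) + 1) ^ 2 = k * √(k - 1) := by
    linear_combination Real.sq_sqrt (show 0 ≤ k - 1 by linarith) - hsqrt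
  rw [f_eq_one_sub_two_mul_sqrt_div (by linarith) hk.ne', hdenom, mul_div_mul_right _ _ hpos.ne']
end

section
/- For every real k with k > k₁ one has f(k) < 1 − 2/k, i.e. 1 − (2k√(k−1) − 4k + 4)/(k−2)² < 1 − 2/k. -/
noncomputable def k₁ : ℝ :=
  2 + (2 + Real.sqrt (44 / 27)) ^ ((1 : ℝ) / 3)
    + (2 - Real.sqrt (44 / 27)) ^ ((1 : ℝ) / 3)

/-! With `s = √(k - 1)`, the fraction in `f k` is `2 * s * (s - 1) ^ 2 / (s ^ 2 - 1) ^ 2`, and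
cancelling `(s - 1) ^ 2` leaves `f k = k / (s + 1) ^ 2`. For `2 < k` the inequality
`f k < 1 - 2 / k` then reads `k < (k - 2) * s`, whose square is the positivity of the cubic
`k ^ 3 - 6 * k ^ 2 + 8 * k - 4`. Substituting `k = x + 2` turns this cubic into `x ^ 3 - 4 * x - 4`,
and the classical factorization of `x ^ 3 + y ^ 3 + z ^ 3 - 3 * x * y * z` shows that it is positive
exactly to the right of its Cardano root. -/

theorem add_lt_iff_cube_add_cube_add_lt_cube {R : Type*} [CommRing R] [LinearOrder R]
    [IsStrictOrderedRing R] {a b x : R} (hab : a ≠ b) :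
    a + b < x ↔ a ^ 3 + b ^ 3 + 3 * (a * b) * x < x ^ 3 := by
  have hfactor : 2 * (x ^ 3 - (a ^ 3 + b ^ 3 + 3 * (a * b) * x)) =
      (x - (a + b)) * ((x + a) ^ 2 + (x + b) ^ 2 + (a - b) ^ 2) := by ring
  have hpos : 0 < (x + a) ^ 2 + (x + b) ^ 2 + (a - b) ^ 2 := by
    have : 0 < (a - b) ^ 2 := sq_pos_of_ne_zero (sub_ne_zero.2 hab)
    positivity
  rw [← sub_pos, ← mul_pos_iff_of_pos_right hpos, ← hfactor, mul_pos_iff_of_pos_left two_pos,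
    sub_pos]

/-- Cardano's expression for the real root of `x ^ 3 = 3 * p * x + 2 * q`. As `Real.rpow` is the
real cube root only on nonnegative bases, this is meant for `0 ≤ p`, `0 ≤ q` and `p ^ 3 ≤ q ^ 2`. -/
noncomputable def cardanoRoot (p q : ℝ) : ℝ :=
  (q + √(q ^ 2 - p ^ 3)) ^ (1 / 3 : ℝ) + (q - √(q ^ 2 - p ^ 3)) ^ (1 / 3 : ℝ)

theorem rpow_one_third_cube {y : ℝ} (hy : 0 ≤ y) : (y ^ (1 / 3 : ℝ)) ^ 3 = y := by
  simpa using Real.rpow_inv_natCast_pow hy three_ne_zero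

theorem cardanoRoot_lt_iff {p q x : ℝ} (hp : 0 ≤ p) (hq : 0 ≤ q) (hpq : p ^ 3 < q ^ 2) :
    cardanoRoot p q < x ↔ 3 * p * x + 2 * q < x ^ 3 := by
  unfold cardanoRoot
  set s := √(q ^ 2 - p ^ 3)
  have hs_sq : s ^ 2 = q ^ 2 - p ^ 3 := Real.sq_sqrt (sub_pos.2 hpq).le
  have hs_pos : 0 < s := Real.sqrt_pos.2 (sub_pos.2 hpq)
  have hs_le : s ≤ q := Real.sqrt_le_iff.2 ⟨hq, sub_le_self _ (pow_nonneg hp 3)⟩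
  have hadd : 0 ≤ q + s := by positivity
  have hsub : 0 ≤ q - s := sub_nonneg.2 hs_le
  set a := (q + s) ^ (1 / 3 : ℝ)
  set b := (q - s) ^ (1 / 3 : ℝ)
  have ha : a ^ 3 = q + s := rpow_one_third_cube hadd
  have hb : b ^ 3 = q - s := rpow_one_third_cube hsub
  have hmul : a * b = p := by
    have hcube : (a * b) ^ 3 = p ^ 3 := by
      rw [mul_pow, ha, hb]
      linear_combination -hs_sq
    exact (pow_left_inj₀ (by positivity) hp three_ne_zero).1 hcube
  have hne : a ≠ b := by
    intro h
    rw [h] at ha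
    linarith
  have hsum : q + s + (q - s) + 3 * p * x = 3 * p * x + 2 * q := by ring
  rw [add_lt_iff_cube_add_cube_add_lt_cube hne, ha, hb, hmul, hsum]

theorem k₁_eq_two_add_cardanoRoot : k₁ = 2 + cardanoRoot (4 / 3) 2 := by
  have hdisc : (2 : ℝ) ^ 2 - (4 / 3) ^ 3 = 44 / 27 := by norm_num
  rw [k₁, cardanoRoot, hdisc, add_assoc]

theorem k₁_lt_iff {k : ℝ} : k₁ < k ↔ 0 < k ^ 3 - 6 * k ^ 2 + 8 * k - 4 := by
  have hshift : k ^ 3 - 6 * k ^ 2 + 8 * k - 4 =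
      (k - 2) ^ 3 - (3 * (4 / 3) * (k - 2) + 2 * 2) := by ring
  rw [k₁_eq_two_add_cardanoRoot, ← lt_sub_iff_add_lt',
    cardanoRoot_lt_iff (by norm_num) (by norm_num) (by norm_num), hshift, sub_pos]

theorem two_le_k₁ : 2 ≤ k₁ := by
  rw [← not_lt, k₁_lt_iff]
  norm_num

theorem f_eq_div_sq {k : ℝ} (hk : 1 ≤ k) (hk2 : k ≠ 2) : f k = k / (√(k - 1) + 1) ^ 2 := by
  unfold f
  set s := √(k - 1)
  have hs_sq : s ^ 2 = k - 1 := Real.sq_sqrt (sub_nonneg.2 hk)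
  have hnum : 2 * k * s - 4 * k + 4 = 2 * s * (s - 1) ^ 2 := by
    linear_combination (4 - 2 * s) * hs_sq
  have hden : k - 2 = (s + 1) * (s - 1) := by linear_combination -hs_sq
  have hs_add : s + 1 ≠ 0 := (add_pos_of_nonneg_of_pos (Real.sqrt_nonneg _) one_pos).ne'
  have hs_sub : s - 1 ≠ 0 := right_ne_zero_of_mul (hden ▸ sub_ne_zero.2 hk2)
  calc 1 - (2 * k * s - 4 * k + 4) / (k - 2) ^ 2
    _ = 1 - 2 * s / (s + 1) ^ 2 := by
        rw [hnum, hden, mul_pow, mul_div_mul_right _ _ (pow_ne_zero 2 hs_sub)]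
    _ = k / (s + 1) ^ 2 := by
        rw [one_sub_div (pow_ne_zero 2 hs_add)]
        congr 1
        linear_combination hs_sq

theorem f_lt_one_sub_two_div_iff {k : ℝ} (hk : 2 < k) :
    f k < 1 - 2 / k ↔ 0 < k ^ 3 - 6 * k ^ 2 + 8 * k - 4 := by
  rw [f_eq_div_sq (by linarith) hk.ne']
  set s := √(k - 1)
  have hs_sq : s ^ 2 = k - 1 := Real.sq_sqrt (by linarith)
  have hs_nonneg : 0 ≤ s := Real.sqrt_nonneg _
  have hk0 : 0 < k := by linarith
  have hrhs_nonneg : 0 ≤ (k - 2) * s := mul_nonneg (sub_pos.2 hk).le hs_nonneg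
  have hcross : (k - 2) * (s + 1) ^ 2 - k * k = 2 * ((k - 2) * s - k) := by
    linear_combination (k - 2) * hs_sq
  have hsquare : ((k - 2) * s) ^ 2 - k ^ 2 = k ^ 3 - 6 * k ^ 2 + 8 * k - 4 := by
    linear_combination (k - 2) ^ 2 * hs_sq
  calc k / (s + 1) ^ 2 < 1 - 2 / k
    _ ↔ k * k < (k - 2) * (s + 1) ^ 2 := by
        rw [one_sub_div hk0.ne', div_lt_div_iff₀ (by positivity) hk0]
    _ ↔ k < (k - 2) * s := by
        rw [← sub_pos, hcross, mul_pos_iff_of_pos_left two_pos, sub_pos]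
    _ ↔ k ^ 2 < ((k - 2) * s) ^ 2 := (pow_lt_pow_iff_left₀ hk0.le hrhs_nonneg two_ne_zero).symm
    _ ↔ 0 < k ^ 3 - 6 * k ^ 2 + 8 * k - 4 := by rw [← sub_pos, hsquare]

theorem stmt2 (k : ℝ) (hk : k₁ < k) : f k < 1 - 2 / k :=
  (f_lt_one_sub_two_div_iff (two_le_k₁.trans_lt hk)).2 (k₁_lt_iff.1 hk)
end

section
/- For every real k with k > k₂ one has g(k) < 1 − 1/k, i.e. 1 − (√(2k³ − k² − 2k + 1) − 3k + 3)/(k−2)² < 1 − 1/k. -/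
noncomputable def g (k : ℝ) : ℝ :=
  1 - (Real.sqrt (2 * k ^ 3 - k ^ 2 - 2 * k + 1) - 3 * k + 3) / (k - 2) ^ 2

noncomputable def k₂ : ℝ :=
  3 / 2 + (5 / 8 + Real.sqrt (83 / 432)) ^ ((1 : ℝ) / 3)
    + (5 / 8 - Real.sqrt (83 / 432)) ^ ((1 : ℝ) / 3)

section Cardano

variable {p q : ℝ}

lemma sqrt_sq_sub_cube_le (hp : 0 ≤ p) (hq : 0 ≤ q) : √(q ^ 2 - p ^ 3) ≤ q :=
  Real.sqrt_le_iff.mpr ⟨hq, sub_le_self _ (by positivity)⟩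

lemma cardanoRoot_nonneg (hp : 0 ≤ p) (hq : 0 ≤ q) : 0 ≤ cardanoRoot p q :=
  add_nonneg (Real.rpow_nonneg (by positivity) _)
    (Real.rpow_nonneg (sub_nonneg.mpr (sqrt_sq_sub_cube_le hp hq)) _)

lemma cardano_rpow_mul_rpow (hp : 0 ≤ p) (hq : 0 ≤ q) (hpq : p ^ 3 ≤ q ^ 2) :
    (q + √(q ^ 2 - p ^ 3)) ^ (1 / 3 : ℝ) * (q - √(q ^ 2 - p ^ 3)) ^ (1 / 3 : ℝ) = p := by
  have hprod : (q + √(q ^ 2 - p ^ 3)) * (q - √(q ^ 2 - p ^ 3)) = p ^ 3 := by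
    rw [← sq_sub_sq, Real.sq_sqrt (sub_nonneg.mpr hpq), sub_sub_cancel]
  rw [← Real.mul_rpow (by positivity) (sub_nonneg.mpr (sqrt_sq_sub_cube_le hp hq)), hprod, one_div]
  exact Real.pow_rpow_inv_natCast hp three_ne_zero

lemma cardanoRoot_cube (hp : 0 ≤ p) (hq : 0 ≤ q) (hpq : p ^ 3 ≤ q ^ 2) :
    cardanoRoot p q ^ 3 = 3 * p * cardanoRoot p q + 2 * q := by
  have cube_rpow {x : ℝ} (hx : 0 ≤ x) : (x ^ (1 / 3 : ℝ)) ^ 3 = x := by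
    rw [one_div]
    exact Real.rpow_inv_natCast_pow hx three_ne_zero
  have ha : ((q + √(q ^ 2 - p ^ 3)) ^ (1 / 3 : ℝ)) ^ 3 = q + √(q ^ 2 - p ^ 3) :=
    cube_rpow (by positivity)
  have hb : ((q - √(q ^ 2 - p ^ 3)) ^ (1 / 3 : ℝ)) ^ 3 = q - √(q ^ 2 - p ^ 3) :=
    cube_rpow (sub_nonneg.mpr (sqrt_sq_sub_cube_le hp hq))
  have hab := cardano_rpow_mul_rpow hp hq hpq
  rw [cardanoRoot]
  set a := (q + √(q ^ 2 - p ^ 3)) ^ (1 / 3 : ℝ)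
  set b := (q - √(q ^ 2 - p ^ 3)) ^ (1 / 3 : ℝ)
  linear_combination ha + hb + 3 * (a + b) * hab

lemma four_mul_le_cardanoRoot_sq (hp : 0 ≤ p) (hq : 0 ≤ q) (hpq : p ^ 3 ≤ q ^ 2) :
    4 * p ≤ cardanoRoot p q ^ 2 := by
  calc 4 * p
      = 4 * (q + √(q ^ 2 - p ^ 3)) ^ (1 / 3 : ℝ) * (q - √(q ^ 2 - p ^ 3)) ^ (1 / 3 : ℝ) := by
        rw [mul_assoc, cardano_rpow_mul_rpow hp hq hpq]
    _ ≤ cardanoRoot p q ^ 2 := four_mul_le_sq_add _ _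

lemma depressed_cubic_pos_iff_cardanoRoot_lt (hp : 0 ≤ p) (hq : 0 ≤ q) (hpq : p ^ 3 ≤ q ^ 2)
    {t : ℝ} : 0 < t ^ 3 - 3 * p * t - 2 * q ↔ cardanoRoot p q < t := by
  have hu := cardanoRoot_nonneg hp hq
  have hcube := cardanoRoot_cube hp hq hpq
  have hsq := four_mul_le_cardanoRoot_sq hp hq hpq
  set u := cardanoRoot p q
  have hfactor : t ^ 3 - 3 * p * t - 2 * q =
      (t - u) * ((t + u / 2) ^ 2 + 3 / 4 * (u ^ 2 - 4 * p)) := by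
    linear_combination hcube
  have hrest : 0 ≤ 3 / 4 * (u ^ 2 - 4 * p) := by linarith
  rw [hfactor]
  constructor
  · intro hpos
    exact sub_pos.mp (pos_of_mul_pos_left hpos (add_nonneg (sq_nonneg _) hrest))
  · intro hut
    have hsum : 0 < t + u / 2 := by linarith
    exact mul_pos (sub_pos.mpr hut) (add_pos_of_pos_of_nonneg (pow_pos hsum 2) hrest)

end Cardano

lemma k₂_eq_add_cardanoRoot : k₂ = 3 / 2 + cardanoRoot (7 / 12) (5 / 8) := by
  have hdisc : (5 / 8 : ℝ) ^ 2 - (7 / 12) ^ 3 = 83 / 432 := by norm_num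
  rw [k₂, cardanoRoot, hdisc, add_assoc]

lemma two_lt_k₂ : 2 < k₂ := by
  have hsq : 4 * (7 / 12) ≤ cardanoRoot (7 / 12) (5 / 8) ^ 2 :=
    four_mul_le_cardanoRoot_sq (by norm_num) (by norm_num) (by norm_num)
  have hroot : 1 / 2 < cardanoRoot (7 / 12) (5 / 8) :=
    lt_of_pow_lt_pow_left₀ 2 (cardanoRoot_nonneg (by norm_num) (by norm_num)) (by linarith)
  rw [k₂_eq_add_cardanoRoot]
  linarith

lemma cubic_pos_iff_k₂_lt {k : ℝ} : 0 < 2 * k ^ 3 - 9 * k ^ 2 + 10 * k - 4 ↔ k₂ < k := by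
  have hshift : 2 * k ^ 3 - 9 * k ^ 2 + 10 * k - 4 =
      2 * ((k - 3 / 2) ^ 3 - 3 * (7 / 12) * (k - 3 / 2) - 2 * (5 / 8)) := by ring
  rw [hshift, mul_pos_iff_of_pos_left two_pos,
    depressed_cubic_pos_iff_cardanoRoot_lt (by norm_num) (by norm_num) (by norm_num),
    k₂_eq_add_cardanoRoot, lt_sub_iff_add_lt']

lemma g_lt_one_sub_one_div_iff {k : ℝ} (hk : 0 < k) (hk2 : k ≠ 2) :
    g k < 1 - 1 / k ↔ 0 < 2 * k ^ 3 - 9 * k ^ 2 + 10 * k - 4 := by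
  have hsq : 0 < (k - 2) ^ 2 := sq_pos_of_ne_zero (sub_ne_zero.mpr hk2)
  have hnum : 0 ≤ 4 * k ^ 2 - 7 * k + 4 := by nlinarith [sq_nonneg (k - 1)]
  have hdiff : (2 * k ^ 3 - k ^ 2 - 2 * k + 1) * k ^ 2 - (4 * k ^ 2 - 7 * k + 4) ^ 2 =
      (k - 2) ^ 2 * (2 * k ^ 3 - 9 * k ^ 2 + 10 * k - 4) := by ring
  calc g k < 1 - 1 / k
      ↔ 1 / k < (√(2 * k ^ 3 - k ^ 2 - 2 * k + 1) - 3 * k + 3) / (k - 2) ^ 2 :=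
        sub_lt_sub_iff_left 1
    _ ↔ (4 * k ^ 2 - 7 * k + 4) / k < √(2 * k ^ 3 - k ^ 2 - 2 * k + 1) := by
        rw [div_lt_div_iff₀ hk hsq, div_lt_iff₀ hk]
        constructor <;> intro h <;> linarith
    _ ↔ ((4 * k ^ 2 - 7 * k + 4) / k) ^ 2 < 2 * k ^ 3 - k ^ 2 - 2 * k + 1 :=
        Real.lt_sqrt (div_nonneg hnum hk.le)
    _ ↔ 0 < (k - 2) ^ 2 * (2 * k ^ 3 - 9 * k ^ 2 + 10 * k - 4) := by
        rw [div_pow, div_lt_iff₀ (pow_pos hk 2), ← sub_pos, hdiff]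
    _ ↔ 0 < 2 * k ^ 3 - 9 * k ^ 2 + 10 * k - 4 := mul_pos_iff_of_pos_left hsq

theorem stmt5 (k : ℝ) (hk : k₂ < k) : g k < 1 - 1 / k := by
  have hk2 : 2 < k := two_lt_k₂.trans hk
  exact (g_lt_one_sub_one_div_iff (two_pos.trans hk2) hk2.ne').mpr (cubic_pos_iff_k₂_lt.mpr hk)
end

section
/- The function g is strictly increasing on the interval (2,∞); moreover g(k) → 2/3 as k → 2⁺ and g(k) → 1 as k → ∞. -/
/-! With `t = k - 1` the radicand is `t * (2 * t ^ 2 + 5 * t + 2)`, whose quadratic factor is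
palindromic, so its square root is `t * r` with `r = √(2 * (t + t⁻¹) + 5)`. The numerator is then
`t * (r - 3)`, and `t * (r ^ 2 - 9) = 2 * (t - 1) ^ 2` shows that rationalizing it cancels the
double zero of the denominator at `t = 1`: `g k = 1 - 2 / (r + 3)`. The right-hand side increases
with `t + t⁻¹`, which in turn increases from `2` to `∞` as `t` runs from `1` to `∞`. -/

open Filter Set Topology

lemma strictMonoOn_add_inv_Ici_one {K : Type*} [Field K] [LinearOrder K] [IsStrictOrderedRing K] :
    StrictMonoOn (fun t : K ↦ t + t⁻¹) (Ici 1) := by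
  intro s hs t ht hst
  have hs₀ : 0 < s := zero_lt_one.trans_le hs
  have ht₀ : 0 < t := zero_lt_one.trans_le ht
  have hprod : 1 < s * t := one_lt_mul_of_le_of_lt hs (lt_of_le_of_lt hs hst)
  have hdiff : t + t⁻¹ - (s + s⁻¹) = (t - s) * (s * t - 1) / (s * t) := by
    field_simp
    ring
  refine sub_pos.mp (hdiff ▸ ?_)
  exact div_pos (mul_pos (sub_pos.mpr hst) (sub_pos.mpr hprod)) (mul_pos hs₀ ht₀)

lemma tendsto_add_inv_atTop {K : Type*} [Field K] [LinearOrder K] [IsStrictOrderedRing K]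
    [TopologicalSpace K] [OrderTopology K] :
    Tendsto (fun t : K ↦ t + t⁻¹) atTop atTop :=
  tendsto_id.atTop_add tendsto_inv_atTop_zero

/-- The function of `x = t + t⁻¹`, where `t = k - 1`, to which `g k` reduces once its numerator is
rationalized. -/
noncomputable def gProfile (x : ℝ) : ℝ :=
  1 - 2 / (√(2 * x + 5) + 3)

lemma gProfile_two : gProfile 2 = 2 / 3 := by
  have hsqrt : √(2 * 2 + 5) = (3 : ℝ) := by
    rw [Real.sqrt_eq_iff_mul_self_eq_of_pos three_pos]
    norm_num
  rw [gProfile, hsqrt]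
  norm_num

lemma continuous_gProfile : Continuous gProfile := by
  have hden (x : ℝ) : √(2 * x + 5) + 3 ≠ 0 := by positivity
  unfold gProfile
  fun_prop (disch := exact hden)

lemma strictMonoOn_gProfile : StrictMonoOn gProfile (Ici (-5 / 2)) := by
  intro x hx y _ hxy
  rw [mem_Ici] at hx
  have hsqrt : √(2 * x + 5) < √(2 * y + 5) := Real.sqrt_lt_sqrt (by linarith) (by linarith)
  unfold gProfile
  gcongr

lemma tendsto_gProfile_atTop : Tendsto gProfile atTop (𝓝 1) := by
  have hradicand : Tendsto (fun x : ℝ ↦ 2 * x + 5) atTop atTop :=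
    tendsto_atTop_add_const_right _ 5 (tendsto_id.const_mul_atTop two_pos)
  have hden : Tendsto (fun x : ℝ ↦ √(2 * x + 5) + 3) atTop atTop :=
    tendsto_atTop_add_const_right _ 3 (Real.tendsto_sqrt_atTop.comp hradicand)
  unfold gProfile
  simpa only [sub_zero] using (hden.const_div_atTop 2).const_sub 1

lemma sqrt_cubic_eq_mul_sqrt_add_inv {t : ℝ} (ht : 0 < t) :
    √(t * (t + 2) * (2 * t + 1)) = t * √(2 * (t + t⁻¹) + 5) := by
  have hfactor : t * (t + 2) * (2 * t + 1) = t ^ 2 * (2 * (t + t⁻¹) + 5) := by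
    field_simp
    ring
  rw [hfactor, Real.sqrt_mul (sq_nonneg t), Real.sqrt_sq ht.le]

lemma g_eq_gProfile {k : ℝ} (hk₁ : 1 < k) (hk₂ : k ≠ 2) :
    g k = gProfile (k - 1 + (k - 1)⁻¹) := by
  obtain ⟨t, rfl⟩ : ∃ t, k = t + 1 := ⟨k - 1, by ring⟩
  have ht : 0 < t := by linarith
  have hsub : t + 1 - 2 ≠ 0 := sub_ne_zero.mpr hk₂
  have hradicand : 2 * (t + 1) ^ 3 - (t + 1) ^ 2 - 2 * (t + 1) + 1 =
      t * (t + 2) * (2 * t + 1) := by ring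
  rw [g, gProfile, hradicand, sqrt_cubic_eq_mul_sqrt_add_inv ht, add_sub_cancel_right]
  set r := √(2 * (t + t⁻¹) + 5)
  have hsq : r ^ 2 = 2 * (t + t⁻¹) + 5 := Real.sq_sqrt (by positivity)
  have hrationalize : t * (r - 3) * (r + 3) = 2 * (t - 1) ^ 2 := by
    linear_combination t * hsq + 2 * mul_inv_cancel₀ ht.ne'
  have hr : r + 3 ≠ 0 := by positivity
  congr 1
  rw [div_eq_div_iff (pow_ne_zero 2 hsub) hr]
  linear_combination hrationalize

lemma strictMonoOn_g : StrictMonoOn g (Ioi 2) := by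
  have hinner : StrictMonoOn (fun k : ℝ ↦ k - 1 + (k - 1)⁻¹) (Ioi 2) :=
    strictMonoOn_add_inv_Ici_one.comp (fun _ _ _ _ h ↦ sub_lt_sub_right h 1)
      fun k (hk : 2 < k) ↦ mem_Ici.mpr (by linarith)
  have hmaps : MapsTo (fun k : ℝ ↦ k - 1 + (k - 1)⁻¹) (Ioi 2) (Ici (-5 / 2)) := by
    intro k (hk : 2 < k)
    have hinv : 0 < (k - 1)⁻¹ := inv_pos.mpr (by linarith)
    exact mem_Ici.mpr (by linarith)
  refine (strictMonoOn_gProfile.comp hinner hmaps).congr ?_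
  exact fun k (hk : 2 < k) ↦ (g_eq_gProfile (by linarith) hk.ne').symm

lemma tendsto_g_nhdsNE_two : Tendsto g (𝓝[≠] 2) (𝓝 (2 / 3)) := by
  have hcont : ContinuousAt (fun k : ℝ ↦ gProfile (k - 1 + (k - 1)⁻¹)) 2 := by
    refine continuous_gProfile.continuousAt.comp ?_
    fun_prop (disch := norm_num)
  have hval : gProfile (2 - 1 + (2 - 1)⁻¹) = 2 / 3 := by
    rw [← gProfile_two]
    norm_num
  refine (hval ▸ hcont.tendsto.mono_left nhdsWithin_le_nhds).congr' ?_
  filter_upwards [self_mem_nhdsWithin, nhdsWithin_le_nhds (Ioi_mem_nhds one_lt_two)] with k hk₂ hk₁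
  exact (g_eq_gProfile hk₁ hk₂).symm

lemma tendsto_g_atTop : Tendsto g atTop (𝓝 1) := by
  have hshift : Tendsto (fun k : ℝ ↦ k - 1) atTop atTop :=
    tendsto_atTop_add_const_right _ (-1) tendsto_id
  refine (tendsto_gProfile_atTop.comp (tendsto_add_inv_atTop.comp hshift)).congr' ?_
  filter_upwards [eventually_gt_atTop 2] with k hk
  exact (g_eq_gProfile (one_lt_two.trans hk) hk.ne').symm

theorem stmt7 :
    StrictMonoOn g (Set.Ioi (2 : ℝ)) ∧
      Filter.Tendsto g (nhdsWithin 2 (Set.Ioi (2 : ℝ))) (nhds (2 / 3)) ∧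
      Filter.Tendsto g Filter.atTop (nhds 1) :=
  ⟨strictMonoOn_g, tendsto_g_nhdsNE_two.mono_left (nhdsGT_le_nhdsNE 2), tendsto_g_atTop⟩
end

section
/- Let k ≥ 3 be a real number and let α be a real number with 0 < α < 1 and g(k) < α. Then k²(1−α)² < (4α−2)(k−1)α. -/
/-!
With `β = 1 - α`, the difference of the two sides is `(k - 2)² β² + 6 (k - 1) β - 2 (k - 1)`.
Completing the square shows that for `k ≠ 2` it is negative exactly when
`|(k - 2)² β + 3 (k - 1)| < √(2 k³ - k² - 2 k + 1)`. Thus `1 - g k` is the larger root in `β`,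
and for `k > 1` the other root is negative, so on `β ≥ 0` only the bound `g k < α` matters.
-/

theorem sub_two_sq_mul_sub_eq_sq_sub {R : Type*} [CommRing R] (k α : R) :
    (k - 2) ^ 2 * (k ^ 2 * (1 - α) ^ 2 - (4 * α - 2) * (k - 1) * α) =
      ((k - 2) ^ 2 * (1 - α) + 3 * (k - 1)) ^ 2 - (2 * k ^ 3 - k ^ 2 - 2 * k + 1) := by
  ring

theorem sq_mul_one_sub_sq_lt_iff_abs_lt_sqrt {k : ℝ} (hk : k ≠ 2) (α : ℝ) :
    k ^ 2 * (1 - α) ^ 2 < (4 * α - 2) * (k - 1) * α ↔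
      |(k - 2) ^ 2 * (1 - α) + 3 * (k - 1)| < √(2 * k ^ 3 - k ^ 2 - 2 * k + 1) := by
  have hpos : 0 < (k - 2) ^ 2 := sq_pos_of_ne_zero (sub_ne_zero.mpr hk)
  calc k ^ 2 * (1 - α) ^ 2 < (4 * α - 2) * (k - 1) * α
    _ ↔ (k - 2) ^ 2 * (k ^ 2 * (1 - α) ^ 2 - (4 * α - 2) * (k - 1) * α) < 0 := by
      rw [← smul_eq_mul ((k - 2) ^ 2), smul_neg_iff_of_pos_left hpos, sub_neg]
    _ ↔ ((k - 2) ^ 2 * (1 - α) + 3 * (k - 1)) ^ 2 < 2 * k ^ 3 - k ^ 2 - 2 * k + 1 := by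
      rw [sub_two_sq_mul_sub_eq_sq_sub, sub_neg]
    _ ↔ |(k - 2) ^ 2 * (1 - α) + 3 * (k - 1)| < √(2 * k ^ 3 - k ^ 2 - 2 * k + 1) := by
      rw [Real.lt_sqrt (abs_nonneg _), sq_abs]

theorem g_lt_iff_lt_sqrt {k : ℝ} (hk : k ≠ 2) (α : ℝ) :
    g k < α ↔
      (k - 2) ^ 2 * (1 - α) + 3 * (k - 1) < √(2 * k ^ 3 - k ^ 2 - 2 * k + 1) := by
  have hpos : 0 < (k - 2) ^ 2 := sq_pos_of_ne_zero (sub_ne_zero.mpr hk)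
  rw [g, sub_lt_comm, lt_div_iff₀' hpos]
  constructor <;> intro h <;> linarith

theorem stmt12_general {k α : ℝ} (hk : 1 ≤ k) (hk2 : k ≠ 2) (hα : α ≤ 1) :
    g k < α ↔ k ^ 2 * (1 - α) ^ 2 < (4 * α - 2) * (k - 1) * α := by
  have hnonneg : 0 ≤ (k - 2) ^ 2 * (1 - α) + 3 * (k - 1) :=
    add_nonneg (mul_nonneg (sq_nonneg _) (sub_nonneg.mpr hα)) (by linarith)
  rw [g_lt_iff_lt_sqrt hk2, sq_mul_one_sub_sq_lt_iff_abs_lt_sqrt hk2, abs_of_nonneg hnonneg]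

theorem stmt12 (k α : ℝ) (hk : 3 ≤ k) (hα0 : 0 < α) (hα1 : α < 1)
    (hgk : g k < α) :
    k ^ 2 * (1 - α) ^ 2 < (4 * α - 2) * (k - 1) * α :=
  (stmt12_general (by linarith) (by linarith) hα1.le).mp hgk
end

section
/- There exists a constant C > 0, depending only on ρ̃ and γ, such that for every ρ > 0: if ρ < 2ρ̃ then (ρ − ρ̃)² ≤ C·K(ρ), and if ρ ≥ 2ρ̃ then (ρ − ρ̃)^γ ≤ C·K(ρ). -/
/-- The potential energy density `K(ρ) = ρ ∫_{ρ̃}^{ρ} (s^γ - ρ̃^γ)/s² ds`. -/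
noncomputable def potK (γ ρt ρ : ℝ) : ℝ :=
  ρ * ∫ s in ρt..ρ, (s ^ γ - ρt ^ γ) / s ^ 2

/-!
Whichever side of `ρ̃` the point `ρ` lies on, `K(ρ)` is `ρ` times the integral of
`|s ^ γ - ρ̃ ^ γ| / s ^ 2` between them, so bounds for the integrand give bounds for `K`.
For the exponent `2` the energy is exactly `(ρ - ρ̃) ^ 2`. On a bounded interval
`|s ^ 2 - ρ̃ ^ 2|` is at most a multiple of `|s ^ γ - ρ̃ ^ γ|`, because `s ↦ s ^ γ` is convex or
concave and its secants through `ρ̃` are therefore at least as steep as one of the two extreme ones.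
When `ρ ≥ 2 ρ̃`, the part of the integral over `[3 ρ / 4, ρ]` alone is of order `ρ ^ γ / ρ`.
-/

open MeasureTheory Set
open scoped Interval

section RpowIncrements

variable {γ a b s t : ℝ}

theorem min_slope_rpow_le_slope_rpow (hγ : 0 ≤ γ) (ha : 0 ≤ a) (hat : a < t) (htb : t < b)
    (hs : s ∈ Icc a b) (hst : s ≠ t) :
    min (slope (· ^ γ) t a) (slope (· ^ γ) t b) ≤ slope (· ^ γ) t s := by
  have ht : t ∈ Ici (0 : ℝ) := ha.trans hat.le
  have ha' : a ∈ Ici 0 \ {t} := ⟨ha, hat.ne⟩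
  have hs' : s ∈ Ici 0 \ {t} := ⟨ha.trans hs.1, hst⟩
  have hb' : b ∈ Ici 0 \ {t} := ⟨ha.trans (hs.1.trans hs.2), htb.ne'⟩
  rcases le_total 1 γ with h | h
  · exact min_le_of_left_le ((convexOn_rpow h).slope_mono ht ha' hs' hs.1)
  · exact min_le_of_right_le ((Real.concaveOn_rpow hγ h).slope_anti ht hs' hb' hs.2)

theorem exists_pos_forall_mul_abs_sub_le_abs_rpow_sub_rpow (hγ : 0 < γ) (ht : 0 < t) (b : ℝ) :
    ∃ c > 0, ∀ s ∈ Icc 0 b, c * |s - t| ≤ |s ^ γ - t ^ γ| := by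
  have hmono := Real.strictMonoOn_rpow_Ici_of_exponent_pos hγ
  have hb : t < max b (2 * t) := lt_max_of_lt_right (by linarith)
  have hleft : 0 < slope (fun x : ℝ => x ^ γ) t 0 := by
    rw [slope_comm, slope_pos_iff_of_le ht.le]
    exact hmono self_mem_Ici ht.le ht
  have hright : 0 < slope (fun x : ℝ => x ^ γ) t (max b (2 * t)) :=
    (slope_pos_iff_of_le hb.le).2 (hmono ht.le (ht.trans hb).le hb)
  refine ⟨_, lt_min hleft hright, fun s hs => ?_⟩
  rcases eq_or_ne s t with rfl | hst
  · simp
  have hslope := min_slope_rpow_le_slope_rpow hγ.le le_rfl ht hb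
    ⟨hs.1, hs.2.trans (le_max_left b (2 * t))⟩ hst
  calc _ ≤ |slope (· ^ γ) t s| * |s - t| := by gcongr; exact hslope.trans (le_abs_self _)
    _ = |s ^ γ - t ^ γ| := by
      rw [← abs_mul, mul_comm, ← smul_eq_mul, sub_smul_slope, vsub_eq_sub]

theorem exists_pos_forall_abs_sq_sub_sq_le_mul_abs_rpow_sub_rpow (hγ : 0 < γ) (ht : 0 < t)
    (b : ℝ) : ∃ C > 0, ∀ s ∈ Icc 0 b, |s ^ 2 - t ^ 2| ≤ C * |s ^ γ - t ^ γ| := by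
  obtain ⟨c, hc, hcs⟩ := exists_pos_forall_mul_abs_sub_le_abs_rpow_sub_rpow hγ ht b
  refine ⟨(|b| + t) / c, by positivity, fun s hs => ?_⟩
  have hsum : |s + t| ≤ |b| + t := by
    rw [abs_of_nonneg (add_nonneg hs.1 ht.le)]
    gcongr
    exact hs.2.trans (le_abs_self b)
  calc |s ^ 2 - t ^ 2| = |s + t| * |s - t| := by rw [sq_sub_sq, abs_mul]
    _ ≤ (|b| + t) * |s - t| := by gcongr
    _ = (|b| + t) / c * (c * |s - t|) := by field_simp
    _ ≤ (|b| + t) / c * |s ^ γ - t ^ γ| := by gcongr; exact hcs s hs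

end RpowIncrements

section PotentialEnergy

variable {α β γ ρ σ t : ℝ}

theorem integrableOn_abs_rpow_sub_rpow_div_sq (γ : ℝ) (ht : 0 < t) (hρ : 0 < ρ) :
    IntegrableOn (fun s : ℝ => |s ^ γ - t ^ γ| / s ^ 2) (Ι t ρ) := by
  refine (ContinuousOn.integrableOn_uIcc fun s hs => ?_).mono_set uIoc_subset_uIcc
  have hs0 : s ≠ 0 := ((lt_min ht hρ).trans_le hs.1).ne'
  exact (((Real.continuousAt_rpow_const s γ (.inl hs0)).sub continuousAt_const).abs.div
    (continuousAt_id.pow 2) (pow_ne_zero 2 hs0)).continuousWithinAt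

theorem potK_eq_mul_setIntegral_abs (hγ : 0 ≤ γ) (ht : 0 ≤ t) (hρ : 0 ≤ ρ) :
    potK γ t ρ = ρ * ∫ s in Ι t ρ, |s ^ γ - t ^ γ| / s ^ 2 := by
  rw [potK]
  congr 1
  rcases le_total t ρ with h | h
  · rw [intervalIntegral.integral_of_le h, uIoc_of_le h]
    refine setIntegral_congr_fun measurableSet_Ioc fun s hs => ?_
    have hle : t ^ γ ≤ s ^ γ := Real.rpow_le_rpow ht hs.1.le hγ
    simp only [abs_of_nonneg (sub_nonneg.2 hle)]
  · rw [intervalIntegral.integral_of_ge h, uIoc_of_ge h, ← integral_neg]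
    refine setIntegral_congr_fun measurableSet_Ioc fun s hs => ?_
    have hle : s ^ γ ≤ t ^ γ := Real.rpow_le_rpow (hρ.trans hs.1.le) hs.2 hγ
    simp only [abs_of_nonpos (sub_nonpos.2 hle), neg_div]

theorem potK_nonneg (hγ : 0 ≤ γ) (ht : 0 ≤ t) (hρ : 0 ≤ ρ) : 0 ≤ potK γ t ρ := by
  rw [potK_eq_mul_setIntegral_abs hγ ht hρ]
  exact mul_nonneg hρ (integral_nonneg fun s => by positivity)

theorem potK_le_mul_potK {C : ℝ} (hα : 0 ≤ α) (hβ : 0 ≤ β) (ht : 0 < t) (hρ : 0 < ρ)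
    (h : ∀ s ∈ Ι t ρ, |s ^ α - t ^ α| ≤ C * |s ^ β - t ^ β|) :
    potK α t ρ ≤ C * potK β t ρ := by
  rw [potK_eq_mul_setIntegral_abs hα ht.le hρ.le, potK_eq_mul_setIntegral_abs hβ ht.le hρ.le,
    mul_left_comm, ← integral_const_mul C]
  refine mul_le_mul_of_nonneg_left ?_ hρ.le
  refine setIntegral_mono_on (integrableOn_abs_rpow_sub_rpow_div_sq α ht hρ)
    ((integrableOn_abs_rpow_sub_rpow_div_sq β ht hρ).const_mul C) measurableSet_uIoc
    fun s hs => ?_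
  rw [← mul_div_assoc]
  gcongr
  exact h s hs

theorem potK_two (ht : 0 < t) (hρ : 0 < ρ) : potK 2 t ρ = (ρ - t) ^ 2 := by
  have hne : ∀ s ∈ uIcc t ρ, s ≠ 0 := fun s hs => ((lt_min ht hρ).trans_le hs.1).ne'
  have hderiv : ∀ s ∈ uIcc t ρ,
      HasDerivAt (fun x => x + t ^ 2 * x⁻¹) ((s ^ 2 - t ^ 2) / s ^ 2) s := fun s hs => by
    have hs0 := hne s hs
    refine ((hasDerivAt_id' s).add ((hasDerivAt_inv hs0).const_mul (t ^ 2))).congr_deriv ?_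
    field_simp
    ring
  have hint : IntervalIntegrable (fun s => (s ^ 2 - t ^ 2) / s ^ 2) volume t ρ :=
    ContinuousOn.intervalIntegrable
      (ContinuousOn.div (by fun_prop) (by fun_prop) fun s hs => pow_ne_zero 2 (hne s hs))
  simp only [potK, Real.rpow_two]
  rw [intervalIntegral.integral_eq_sub_of_hasDerivAt hderiv hint]
  field_simp
  ring

theorem exists_pos_forall_sq_sub_le_mul_potK (hγ : 0 < γ) (ht : 0 < t) (b : ℝ) :
    ∃ C > 0, ∀ ρ ∈ Ioc 0 b, (ρ - t) ^ 2 ≤ C * potK γ t ρ := by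
  obtain ⟨C, hC, hCs⟩ :=
    exists_pos_forall_abs_sq_sub_sq_le_mul_abs_rpow_sub_rpow hγ ht (max t b)
  refine ⟨C, hC, fun ρ hρ => ?_⟩
  rw [← potK_two ht hρ.1]
  refine potK_le_mul_potK zero_le_two hγ.le ht hρ.1 fun s hs => ?_
  simp only [Real.rpow_two]
  exact hCs s ⟨((lt_min ht hρ.1).trans hs.1).le, hs.2.trans (max_le_max_left t hρ.2)⟩

theorem rpow_sub_rpow_mul_one_sub_div_le_potK (hγ : 0 ≤ γ) (ht : 0 < t) (htσ : t ≤ σ)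
    (hσρ : σ ≤ ρ) : (σ ^ γ - t ^ γ) * (1 - σ / ρ) ≤ potK γ t ρ := by
  have hσ : 0 < σ := ht.trans_le htσ
  have hρ : 0 < ρ := hσ.trans_le hσρ
  have hsub : Ioc σ ρ ⊆ Ι t ρ := by
    rw [uIoc_of_le (htσ.trans hσρ)]
    exact Ioc_subset_Ioc_left htσ
  have hint := integrableOn_abs_rpow_sub_rpow_div_sq γ ht hρ
  have hconst : ∀ s ∈ Ioc σ ρ, (σ ^ γ - t ^ γ) / ρ ^ 2 ≤ |s ^ γ - t ^ γ| / s ^ 2 := fun s hs => by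
    have hs0 : 0 < s := hσ.trans hs.1
    have hnum : σ ^ γ - t ^ γ ≤ |s ^ γ - t ^ γ| :=
      (sub_le_sub_right (Real.rpow_le_rpow hσ.le hs.1.le hγ) _).trans (le_abs_self _)
    exact div_le_div₀ (abs_nonneg _) hnum (pow_pos hs0 2) (pow_le_pow_left₀ hs0.le hs.2 2)
  rw [potK_eq_mul_setIntegral_abs hγ ht.le hρ.le]
  calc (σ ^ γ - t ^ γ) * (1 - σ / ρ)
      = ρ * ((σ ^ γ - t ^ γ) / ρ ^ 2 * volume.real (Ioc σ ρ)) := by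
        rw [Real.volume_real_Ioc_of_le hσρ]
        field_simp
    _ ≤ ρ * ∫ s in Ioc σ ρ, |s ^ γ - t ^ γ| / s ^ 2 := by
        gcongr
        exact setIntegral_ge_of_const_le_real measurableSet_Ioc measure_Ioc_lt_top.ne hconst
          (hint.mono_set hsub)
    _ ≤ ρ * ∫ s in Ι t ρ, |s ^ γ - t ^ γ| / s ^ 2 := by
        refine mul_le_mul_of_nonneg_left ?_ hρ.le
        exact setIntegral_mono_set hint (.of_forall fun s => by positivity) hsub.eventuallyLE

theorem mul_rpow_le_potK {q m : ℝ} (hγ : 0 ≤ γ) (hq : 0 ≤ q) (hqm : q ≤ m) (hm : m ≤ 1)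
    (ht : 0 < t) (hρ : 0 < ρ) (htρ : t ≤ q * ρ) :
    (m ^ γ - q ^ γ) * (1 - m) * ρ ^ γ ≤ potK γ t ρ := by
  have hmρ : t ≤ m * ρ := htρ.trans (by gcongr)
  calc (m ^ γ - q ^ γ) * (1 - m) * ρ ^ γ
      = ((m * ρ) ^ γ - (q * ρ) ^ γ) * (1 - m) := by
        rw [Real.mul_rpow (hq.trans hqm) hρ.le, Real.mul_rpow hq hρ.le]
        ring
    _ ≤ ((m * ρ) ^ γ - t ^ γ) * (1 - m) := by
        gcongr
    _ = ((m * ρ) ^ γ - t ^ γ) * (1 - m * ρ / ρ) := by rw [mul_div_cancel_right₀ m hρ.ne']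
    _ ≤ potK γ t ρ :=
        rpow_sub_rpow_mul_one_sub_div_le_potK hγ ht hmρ (mul_le_of_le_one_left hρ.le hm)

theorem exists_pos_forall_sub_rpow_le_mul_potK (hγ : 0 < γ) :
    ∃ C > 0, ∀ t ρ : ℝ, 0 < t → 2 * t ≤ ρ → (ρ - t) ^ γ ≤ C * potK γ t ρ := by
  set c : ℝ := ((3 / 4) ^ γ - (1 / 2) ^ γ) * (1 - 3 / 4)
  have hc : 0 < c :=
    mul_pos (sub_pos.2 (Real.rpow_lt_rpow (by norm_num) (by norm_num) hγ)) (by norm_num)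
  refine ⟨c⁻¹, inv_pos.2 hc, fun t ρ ht h => ?_⟩
  calc (ρ - t) ^ γ ≤ ρ ^ γ := Real.rpow_le_rpow (by linarith) (by linarith) hγ.le
    _ ≤ c⁻¹ * potK γ t ρ := (le_inv_mul_iff₀ hc).2 <|
        mul_rpow_le_potK hγ.le (by norm_num) (by norm_num) (by norm_num) ht (by linarith)
          (by linarith)

end PotentialEnergy

theorem stmt15_general (γ ρt : ℝ) (hγ : 0 < γ) (hρt : 0 < ρt) :
    ∃ C : ℝ, 0 < C ∧
      ∀ ρ : ℝ, 0 < ρ →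
        (ρ < 2 * ρt → (ρ - ρt) ^ 2 ≤ C * potK γ ρt ρ) ∧
        (2 * ρt ≤ ρ → (ρ - ρt) ^ γ ≤ C * potK γ ρt ρ) := by
  obtain ⟨A, hA, hnear⟩ := exists_pos_forall_sq_sub_le_mul_potK hγ hρt (2 * ρt)
  obtain ⟨B, -, hfar⟩ := exists_pos_forall_sub_rpow_le_mul_potK hγ
  refine ⟨max A B, lt_max_of_lt_left hA, fun ρ hρ => ?_⟩
  have hK : 0 ≤ potK γ ρt ρ := potK_nonneg hγ.le hρt.le hρ.le
  exact ⟨fun h => (hnear ρ ⟨hρ, h.le⟩).trans (by gcongr; exact le_max_left A B),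
    fun h => (hfar ρt ρ hρt h).trans (by gcongr; exact le_max_right A B)⟩

theorem stmt15 (γ ρt : ℝ) (hγ : 1 < γ) (hρt : 0 < ρt) :
    ∃ C : ℝ, 0 < C ∧
      ∀ ρ : ℝ, 0 < ρ →
        (ρ < 2 * ρt → (ρ - ρt) ^ 2 ≤ C * potK γ ρt ρ) ∧
        (2 * ρt ≤ ρ → (ρ - ρt) ^ γ ≤ C * potK γ ρt ρ) :=
  stmt15_general γ ρt (zero_lt_one.trans hγ) hρt
end
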